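/- arXiv:1909.01516 — 2 statements merged into one kernel-verified Lean document; each statement's English description precedes it below -/
import Mathlib

section
/- (Detectability lemma.) Let H = Σ_{i,j} P_{ij} be a frustration-free Hamiltonian as in the setup, with spectral gap γ, noncommutation degree g, and detectability-lemma operator DL(H). Then for any unit vector ψ orthogonal to the ground space G, ‖DL(H)ψ‖² ≤ 1/(1 + γ/g²). -/
variable {E : Type*} [NormedAddCommGroup E] [InnerProductSpace ℂ E] [FiniteDimensional ℂ E]

/-- An orthogonal projector: a self-adjoint idempotent operator. -/
def IsProjector (P : E →L[ℂ] E) : Prop := IsSelfAdjoint P ∧ P * P = P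

/-- The smallest nonzero (for a positive semidefinite operator, smallest positive)
eigenvalue of an operator. -/
noncomputable def minNonzeroEig (A : E →L[ℂ] E) : ℝ :=
  sInf {c : ℝ | 0 < c ∧ ∃ v : E, v ≠ 0 ∧ A v = (c : ℂ) • v}

/-- The detectability-lemma operator `DL(H) = ∏_{α=1}^{L} ∏_{i ∈ T_α} (1 − P_i)`:
the product of the complementary projectors, taken layer by layer. -/
noncomputable def DLop {ι : Type*} [Fintype ι] [DecidableEq ι] {L : ℕ}
    (P : ι → (E →L[ℂ] E)) (layer : ι → Fin L)
    (hcomm : ∀ i j, layer i = layer j → Commute (P i) (P j)) : E →L[ℂ] E :=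
  ((List.finRange L).map (fun α =>
    (Finset.univ.filter (fun i => layer i = α)).noncommProd (fun i => 1 - P i)
      (fun i hi j hj _ =>
        Commute.sub_left (Commute.one_left _)
          (Commute.sub_right (Commute.one_right _)
            (hcomm i j (by
              simp only [Finset.coe_filter, Set.mem_setOf_eq] at hi hj
              rw [hi.2, hj.2]))))) ).prod

/-!
Read `φ = (1 - P₁) ⋯ (1 - Pₙ) ψ` from right to left: the factor `1 - Pⱼ` removes from the current
vector a component of norm `wⱼ`, and by Pythagoras `∑ wⱼ² = ‖ψ‖² - ‖φ‖²`. For a fixed `i`, the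
quantity `‖Pᵢ ·‖` vanishes once the factor `1 - Pᵢ` has been applied; afterwards a factor `1 - Pⱼ`
does not increase it if `Pⱼ` commutes with `Pᵢ`, and increases it by at most `wⱼ` otherwise. So
`‖Pᵢ φ‖` is at most the sum of the `wⱼ` over the at most `g` indices `j` with `[Pᵢ, Pⱼ] ≠ 0`.
Squaring and summing over `i` gives `⟪Hφ, φ⟫ = ∑ ‖Pᵢ φ‖² ≤ g² (‖ψ‖² - ‖φ‖²)`, while
`γ ‖φ‖² ≤ ⟪Hφ, φ⟫` because `φ` is still orthogonal to the ground space.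
-/

open Finset RCLike
open scoped InnerProductSpace

theorem sum_sq_sum_bipartiteAbove_le {α β R : Type*} [Semiring R] [LinearOrder R]
    [IsStrictOrderedRing R] [ExistsAddOfLE R] (r : α → β → Prop) [∀ a b, Decidable (r a b)]
    {s : Finset α} {t : Finset β} {m n : ℕ} (hm : ∀ a ∈ s, #(t.bipartiteAbove r a) ≤ m)
    (hn : ∀ b ∈ t, #(s.bipartiteBelow r b) ≤ n) (f : β → R) :
    ∑ a ∈ s, (∑ b ∈ t.bipartiteAbove r a, f b) ^ 2 ≤ m * (n * ∑ b ∈ t, f b ^ 2) := by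
  have row_le : ∀ a ∈ s, (∑ b ∈ t.bipartiteAbove r a, f b) ^ 2 ≤
      m * ∑ b ∈ t.bipartiteAbove r a, f b ^ 2 := fun a ha ↦
    sq_sum_le_card_mul_sum_sq.trans <|
      mul_le_mul_of_nonneg_right (mod_cast hm a ha) (sum_nonneg fun b _ ↦ sq_nonneg (f b))
  calc ∑ a ∈ s, (∑ b ∈ t.bipartiteAbove r a, f b) ^ 2
      ≤ ∑ a ∈ s, m * ∑ b ∈ t.bipartiteAbove r a, f b ^ 2 := sum_le_sum row_le
    _ = m * ∑ b ∈ t, ∑ _a ∈ s.bipartiteBelow r b, f b ^ 2 := by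
      rw [← mul_sum, sum_sum_bipartiteAbove_eq_sum_sum_bipartiteBelow]
    _ = m * ∑ b ∈ t, #(s.bipartiteBelow r b) * f b ^ 2 := by
      simp only [sum_const, nsmul_eq_mul]
    _ ≤ m * ∑ b ∈ t, n * f b ^ 2 := by
      gcongr with b hb
      · exact sq_nonneg (f b)
      · exact hn b hb
    _ = m * (n * ∑ b ∈ t, f b ^ 2) := by rw [mul_sum t _ (n : R)]

theorem noncommProd_eq_prod_map_toList {ι M : Type*} [Monoid M] (s : Finset ι) (f : ι → M)
    (comm : (s : Set ι).Pairwise (Function.onFun Commute f)) :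
    s.noncommProd f comm = (s.toList.map f).prod := by
  classical
  rw [← noncommProd_toFinset s.toList f (by simpa only [toList_toFinset] using comm)
    s.nodup_toList]
  simp only [toList_toFinset]

section ComplementaryProduct

variable {ι R : Type*} [Ring R]

/-- The ordered product `(1 - P i₁) * ⋯ * (1 - P iₙ)` of complements along a list
`[i₁, …, iₙ]`. Applied to a vector, the factor of the last index acts first. -/
def complProd (P : ι → R) (l : List ι) : R :=
  (l.map fun i ↦ 1 - P i).prod

theorem complProd_cons (P : ι → R) (i : ι) (l : List ι) :
    complProd P (i :: l) = (1 - P i) * complProd P l := by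
  simp only [complProd, List.map_cons, List.prod_cons]

theorem complProd_flatMap {κ : Type*} (P : ι → R) (l : List κ) (f : κ → List ι) :
    complProd P (l.flatMap f) = (l.map fun a ↦ complProd P (f a)).prod := by
  rw [complProd, List.map_flatMap, List.flatMap_def, List.prod_flatten, List.map_map]
  rfl

omit [FiniteDimensional ℂ E] in
theorem exists_DLop_eq_complProd [Fintype ι] [DecidableEq ι] {L : ℕ}
    (P : ι → (E →L[ℂ] E)) (layer : ι → Fin L)
    (hcomm : ∀ i j, layer i = layer j → Commute (P i) (P j)) :
    ∃ l : List ι, l.Nodup ∧ (∀ i, i ∈ l) ∧ DLop P layer hcomm = complProd P l := by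
  let layerList (α : Fin L) : List ι := (univ.filter fun i ↦ layer i = α).toList
  have mem_layerList {i : ι} {α : Fin L} : i ∈ layerList α ↔ layer i = α := by
    simp only [layerList, mem_toList, mem_filter_univ]
  refine ⟨(List.finRange L).flatMap layerList, List.nodup_flatMap.mpr ⟨?_, ?_⟩, fun i ↦ ?_, ?_⟩
  · exact fun α _ ↦ nodup_toList _
  · refine (List.nodup_finRange L).imp fun hne i hi hi' ↦ hne ?_
    exact (mem_layerList.mp hi).symm.trans (mem_layerList.mp hi')
  · exact List.mem_flatMap.mpr ⟨layer i, List.mem_finRange _, mem_layerList.mpr rfl⟩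
  · rw [complProd_flatMap, DLop]
    exact congrArg List.prod <|
      List.map_congr_left fun α _ ↦ noncommProd_eq_prod_map_toList _ _ _

end ComplementaryProduct

section StarProjection

variable {𝕜 F : Type*} [RCLike 𝕜] [NormedAddCommGroup F] [InnerProductSpace 𝕜 F] [CompleteSpace F]
  {P Q : F →L[𝕜] F}

theorem reApplyInnerSelf_eq_norm_sq_of_isStarProjection (hP : IsStarProjection P) (x : F) :
    P.reApplyInnerSelf x = ‖P x‖ ^ 2 := by
  have apply_apply : P (P x) = P x := DFunLike.congr_fun hP.isIdempotentElem.eq x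
  have symm : ⟪P (P x), x⟫_𝕜 = ⟪P x, P x⟫_𝕜 := hP.isSelfAdjoint.isSymmetric (P x) x
  rw [P.reApplyInnerSelf_apply, ← inner_self_eq_norm_sq (𝕜 := 𝕜) (P x), ← symm, apply_apply]

theorem norm_sub_apply_sq_of_isStarProjection (hP : IsStarProjection P) (x : F) :
    ‖x - P x‖ ^ 2 = ‖x‖ ^ 2 - ‖P x‖ ^ 2 := by
  have inner_eq : re ⟪x, P x⟫_𝕜 = ‖P x‖ ^ 2 := by
    rw [inner_re_symm, ← P.reApplyInnerSelf_apply,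
      reApplyInnerSelf_eq_norm_sq_of_isStarProjection hP]
  rw [norm_sub_sq (𝕜 := 𝕜), inner_eq]
  ring

theorem norm_apply_le_of_isStarProjection (hP : IsStarProjection P) (x : F) : ‖P x‖ ≤ ‖x‖ :=
  P.le_of_opNorm_le hP.norm_le x |>.trans_eq (one_mul _)

theorem norm_apply_sub_apply_le_of_commute (hQ : IsStarProjection Q) (h : Commute P Q) (x : F) :
    ‖P (x - Q x)‖ ≤ ‖P x‖ := by
  have swap : P (x - Q x) = (1 - Q) (P x) :=
    DFunLike.congr_fun ((Commute.one_right P).sub_right h).eq x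
  exact swap ▸ norm_apply_le_of_isStarProjection hQ.one_sub (P x)

theorem norm_apply_sub_apply_le_add (hP : IsStarProjection P) (x : F) :
    ‖P (x - Q x)‖ ≤ ‖P x‖ + ‖Q x‖ := by
  rw [map_sub]
  exact (norm_sub_le _ _).trans (by gcongr; exact norm_apply_le_of_isStarProjection hP (Q x))

end StarProjection

section DetectabilityLemma

variable {𝕜 F ι : Type*} [RCLike 𝕜] [NormedAddCommGroup F] [InnerProductSpace 𝕜 F]
  {P : ι → (F →L[𝕜] F)}

@[simp]
theorem complProd_nil_apply (ψ : F) : complProd P [] ψ = ψ := rfl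

theorem complProd_cons_apply (i : ι) (l : List ι) (ψ : F) :
    complProd P (i :: l) ψ = complProd P l ψ - P i (complProd P l ψ) := by
  rw [complProd_cons]
  rfl

/-- The norm of the component that the factor `1 - P j` removes when the factors of
`complProd P l` are applied to `ψ` one after the other. For an index `j` that occurs more than
once, the factor meant is the one applied last; for `j ∉ l` the value is `0`. -/
def removedNorm [DecidableEq ι] (P : ι → (F →L[𝕜] F)) (ψ : F) : List ι → ι → ℝ
  | [] => 0
  | i :: l => Function.update (removedNorm P ψ l) i ‖P i (complProd P l ψ)‖

theorem removedNorm_cons_self [DecidableEq ι] (ψ : F) (i : ι) (l : List ι) :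
    removedNorm P ψ (i :: l) i = ‖P i (complProd P l ψ)‖ :=
  Function.update_self ..

theorem removedNorm_cons_of_ne [DecidableEq ι] (ψ : F) {i j : ι} (hji : j ≠ i) (l : List ι) :
    removedNorm P ψ (i :: l) j = removedNorm P ψ l j :=
  Function.update_of_ne hji ..

theorem removedNorm_nonneg [DecidableEq ι] (ψ : F) (l : List ι) (j : ι) :
    0 ≤ removedNorm P ψ l j := by
  induction l with
  | nil => exact le_rfl
  | cons i l ih =>
    obtain rfl | hji := eq_or_ne j i
    · exact removedNorm_cons_self (P := P) ψ j l ▸ norm_nonneg _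
    · exact removedNorm_cons_of_ne (P := P) ψ hji l ▸ ih

variable [CompleteSpace F]

theorem sum_removedNorm_sq [DecidableEq ι] (hP : ∀ i, IsStarProjection (P i)) (ψ : F)
    {l : List ι} (hl : l.Nodup) :
    ∑ j ∈ l.toFinset, removedNorm P ψ l j ^ 2 = ‖ψ‖ ^ 2 - ‖complProd P l ψ‖ ^ 2 := by
  induction l with
  | nil => simp
  | cons i l ih =>
    obtain ⟨hil, hl⟩ := List.nodup_cons.mp hl
    have hil' : i ∉ l.toFinset := mt List.mem_toFinset.mp hil
    have sum_cons : ∑ j ∈ l.toFinset, removedNorm P ψ (i :: l) j ^ 2 =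
        ∑ j ∈ l.toFinset, removedNorm P ψ l j ^ 2 := sum_congr rfl fun j hj ↦ by
      rw [removedNorm_cons_of_ne ψ (ne_of_mem_of_not_mem hj hil')]
    rw [List.toFinset_cons, sum_insert hil', removedNorm_cons_self, sum_cons, ih hl,
      complProd_cons_apply, norm_sub_apply_sq_of_isStarProjection (hP i)]
    ring

open scoped Classical in
theorem norm_apply_complProd_le (hP : ∀ i, IsStarProjection (P i)) (ψ : F) {l : List ι}
    (hl : l.Nodup) {i : ι} (hi : i ∈ l) :
    ‖P i (complProd P l ψ)‖ ≤ ∑ j ∈ l.toFinset with ¬Commute (P i) (P j), removedNorm P ψ l j := by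
  induction l with
  | nil => exact absurd hi List.not_mem_nil
  | cons k l ih =>
    obtain ⟨hkl, hl⟩ := List.nodup_cons.mp hl
    rw [complProd_cons_apply]
    set φ := complProd P l ψ
    obtain rfl | hil := List.mem_cons.mp hi
    · have apply_sub_eq_zero : P i (φ - P i φ) = 0 :=
        DFunLike.congr_fun (hP i).isIdempotentElem.mul_one_sub_self φ
      rw [apply_sub_eq_zero, norm_zero]
      exact sum_nonneg fun j _ ↦ removedNorm_nonneg ψ _ j
    have hkl' : k ∉ {j ∈ l.toFinset | ¬Commute (P i) (P j)} :=
      fun hk ↦ hkl (List.mem_toFinset.mp (mem_of_mem_filter k hk))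
    have sum_cons : ∑ j ∈ l.toFinset with ¬Commute (P i) (P j), removedNorm P ψ (k :: l) j =
        ∑ j ∈ l.toFinset with ¬Commute (P i) (P j), removedNorm P ψ l j :=
      sum_congr rfl fun j hj ↦ removedNorm_cons_of_ne ψ (ne_of_mem_of_not_mem hj hkl') l
    rw [List.toFinset_cons, filter_insert]
    by_cases hcomm : Commute (P i) (P k)
    · rw [if_neg (not_not.mpr hcomm), sum_cons]
      exact (norm_apply_sub_apply_le_of_commute (hP k) hcomm φ).trans (ih hl hil)
    · rw [if_pos hcomm, sum_insert hkl', removedNorm_cons_self, sum_cons, add_comm]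
      exact (norm_apply_sub_apply_le_add (hP i) φ).trans (by gcongr; exact ih hl hil)

open scoped Classical in
theorem sum_norm_apply_complProd_sq_le (hP : ∀ i, IsStarProjection (P i)) {g : ℕ} {l : List ι}
    (hg : ∀ i ∈ l, #{j ∈ l.toFinset | ¬Commute (P i) (P j)} ≤ g) (hl : l.Nodup) (ψ : F) :
    ∑ i ∈ l.toFinset, ‖P i (complProd P l ψ)‖ ^ 2 ≤
      (g : ℝ) ^ 2 * (‖ψ‖ ^ 2 - ‖complProd P l ψ‖ ^ 2) := by
  let r (i j : ι) : Prop := ¬Commute (P i) (P j)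
  have degree_le : ∀ i ∈ l.toFinset, #(l.toFinset.bipartiteAbove r i) ≤ g :=
    fun i hi ↦ hg i (List.mem_toFinset.mp hi)
  have codegree_le : ∀ j ∈ l.toFinset, #(l.toFinset.bipartiteBelow r j) ≤ g := fun j hj ↦ by
    simpa only [bipartiteBelow, bipartiteAbove, r, Commute.symm_iff] using degree_le j hj
  calc ∑ i ∈ l.toFinset, ‖P i (complProd P l ψ)‖ ^ 2
      ≤ ∑ i ∈ l.toFinset, (∑ j ∈ l.toFinset.bipartiteAbove r i, removedNorm P ψ l j) ^ 2 := by
        gcongr with i hi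
        exact norm_apply_complProd_le hP ψ hl (List.mem_toFinset.mp hi)
    _ ≤ g * (g * ∑ j ∈ l.toFinset, removedNorm P ψ l j ^ 2) :=
        sum_sq_sum_bipartiteAbove_le r degree_le codegree_le _
    _ = (g : ℝ) ^ 2 * (‖ψ‖ ^ 2 - ‖complProd P l ψ‖ ^ 2) := by
        rw [sum_removedNorm_sq hP ψ hl]
        ring

theorem reApplyInnerSelf_sum_eq_sum_norm_sq (hP : ∀ i, IsStarProjection (P i)) (s : Finset ι)
    (x : F) : (∑ i ∈ s, P i).reApplyInnerSelf x = ∑ i ∈ s, ‖P i x‖ ^ 2 := by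
  simp only [← reApplyInnerSelf_eq_norm_sq_of_isStarProjection (hP _),
    ContinuousLinearMap.reApplyInnerSelf_apply, _root_.sum_apply, sum_inner, map_sum]

theorem apply_eq_zero_of_sum_apply_eq_zero (hP : ∀ i, IsStarProjection (P i)) {s : Finset ι}
    {x : F} (hx : (∑ i ∈ s, P i) x = 0) {i : ι} (hi : i ∈ s) : P i x = 0 := by
  have sum_eq_zero : ∑ i ∈ s, ‖P i x‖ ^ 2 = 0 := by
    rw [← reApplyInnerSelf_sum_eq_sum_norm_sq hP, ContinuousLinearMap.reApplyInnerSelf_apply, hx,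
      inner_zero_left, map_zero]
  rw [sum_eq_zero_iff_of_nonneg fun i _ ↦ sq_nonneg ‖P i x‖] at sum_eq_zero
  exact norm_eq_zero.mp (sq_eq_zero_iff.mp (sum_eq_zero i hi))

theorem complProd_apply_mem_orthogonal {K : Submodule 𝕜 F} {l : List ι}
    (hP : ∀ i ∈ l, IsSelfAdjoint (P i)) (hK : ∀ i ∈ l, ∀ v ∈ K, P i v = 0) {ψ : F} (hψ : ψ ∈ Kᗮ) :
    complProd P l ψ ∈ Kᗮ := by
  induction l with
  | nil => exact hψ
  | cons i l ih =>
    rw [List.forall_mem_cons] at hP hK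
    have apply_mem (x : F) : P i x ∈ Kᗮ := fun v hv ↦ by
      have symm : ⟪P i v, x⟫_𝕜 = ⟪v, P i x⟫_𝕜 := hP.1.isSymmetric v x
      rw [← symm, hK.1 v hv, inner_zero_left]
    rw [complProd_cons_apply]
    exact sub_mem (ih hP.2 hK.2) (apply_mem _)

/-- In infinite dimensions `H` need not have eigenvalues, so the gap enters as a lower bound for the
quadratic form of `H` and not as `minNonzeroEig H`. -/
theorem stmt_5_general [Fintype ι] (hP : ∀ i, IsStarProjection (P i)) {g : ℕ} (hg : 0 < g)
    (hgbound : ∀ i, Nat.card {j : ι // j ≠ i ∧ ¬Commute (P i) (P j)} ≤ g)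
    {γ : ℝ} (hγ : 0 ≤ γ)
    (hgap : ∀ x ∈ (LinearMap.ker ((∑ i, P i : F →L[𝕜] F) : F →ₗ[𝕜] F))ᗮ,
      γ * ‖x‖ ^ 2 ≤ (∑ i, P i).reApplyInnerSelf x)
    {l : List ι} (hl : l.Nodup) (hmem : ∀ i, i ∈ l)
    {ψ : F} (hψ : ψ ∈ (LinearMap.ker ((∑ i, P i : F →L[𝕜] F) : F →ₗ[𝕜] F))ᗮ) :
    ‖complProd P l ψ‖ ^ 2 ≤ ‖ψ‖ ^ 2 / (1 + γ / (g : ℝ) ^ 2) := by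
  classical
  have toFinset_eq_univ : l.toFinset = univ :=
    eq_univ_of_forall fun i ↦ List.mem_toFinset.mpr (hmem i)
  have degree_le (i : ι) : #{j ∈ l.toFinset | ¬Commute (P i) (P j)} ≤ g := by
    have ne_of_not_commute (j : ι) (h : ¬Commute (P i) (P j)) : j ≠ i := by
      rintro rfl
      exact h (Commute.refl _)
    simpa only [toFinset_eq_univ, Nat.card_eq_fintype_card, Fintype.card_subtype,
      and_iff_right_of_imp (ne_of_not_commute _)] using hgbound i
  have energy_le := sum_norm_apply_complProd_sq_le hP (fun i _ ↦ degree_le i) hl ψ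
  rw [toFinset_eq_univ, ← reApplyInnerSelf_sum_eq_sum_norm_sq hP] at energy_le
  have le_energy := hgap (complProd P l ψ) <|
    complProd_apply_mem_orthogonal (fun i _ ↦ (hP i).isSelfAdjoint)
      (fun i _ v hv ↦ apply_eq_zero_of_sum_apply_eq_zero hP hv (mem_univ i)) hψ
  have div_le : γ / (g : ℝ) ^ 2 * ‖complProd P l ψ‖ ^ 2 ≤ ‖ψ‖ ^ 2 - ‖complProd P l ψ‖ ^ 2 := by
    rw [div_mul_eq_mul_div, div_le_iff₀' (by positivity)]
    exact le_energy.trans energy_le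
  rw [le_div_iff₀ (by positivity)]
  linarith

end DetectabilityLemma

theorem re_inner_apply_self_eq_sum_eigenvalues {𝕜 F : Type*} [RCLike 𝕜] [NormedAddCommGroup F]
    [InnerProductSpace 𝕜 F] [FiniteDimensional 𝕜 F] {n : ℕ} {T : F →ₗ[𝕜] F} (hT : T.IsSymmetric)
    (hn : Module.finrank 𝕜 F = n) (x : F) :
    re ⟪T x, x⟫_𝕜 =
      ∑ k, hT.eigenvalues hn k * ‖⟪hT.eigenvectorBasis hn k, x⟫_𝕜‖ ^ 2 := by
  rw [← (hT.eigenvectorBasis hn).repr.inner_map_map, PiLp.inner_apply, map_sum]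
  refine sum_congr rfl fun k _ ↦ ?_
  rw [hT.eigenvectorBasis_apply_self_apply, ← smul_eq_mul, inner_smul_left, conj_ofReal,
    re_ofReal_mul, inner_self_eq_norm_sq, OrthonormalBasis.repr_apply_apply]

omit [FiniteDimensional ℂ E] in
theorem minNonzeroEig_nonneg (A : E →L[ℂ] E) : 0 ≤ minNonzeroEig A :=
  Real.sInf_nonneg fun _ hc ↦ hc.1.le

omit [FiniteDimensional ℂ E] in
theorem minNonzeroEig_le {A : E →L[ℂ] E} {c : ℝ} (hc : 0 < c) {v : E} (hv : v ≠ 0)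
    (hAv : A v = (c : ℂ) • v) : minNonzeroEig A ≤ c :=
  csInf_le ⟨0, fun _ hd ↦ hd.1.le⟩ ⟨hc, v, hv, hAv⟩

theorem minNonzeroEig_mul_norm_sq_le {A : E →L[ℂ] E} (hA : A.IsPositive) {x : E}
    (hx : x ∈ (LinearMap.ker (A : E →ₗ[ℂ] E))ᗮ) :
    minNonzeroEig A * ‖x‖ ^ 2 ≤ A.reApplyInnerSelf x := by
  have hsymm := hA.toLinearMap.isSymmetric
  let b := hsymm.eigenvectorBasis rfl
  let μ := hsymm.eigenvalues rfl
  have apply_basis (k) : A (b k) = (μ k : ℂ) • b k := hsymm.apply_eigenvectorBasis rfl k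
  have eigenvalue_nonneg (k) : 0 ≤ μ k := hA.toLinearMap.nonneg_eigenvalues rfl k
  have term_le (k) : minNonzeroEig A * ‖⟪b k, x⟫_ℂ‖ ^ 2 ≤ μ k * ‖⟪b k, x⟫_ℂ‖ ^ 2 := by
    obtain hμ | hμ := (eigenvalue_nonneg k).eq_or_lt
    · have mem_ker : b k ∈ LinearMap.ker (A : E →ₗ[ℂ] E) := by
        rw [LinearMap.mem_ker, ContinuousLinearMap.coe_coe, apply_basis, ← hμ,
          Complex.ofReal_zero, zero_smul]
      have inner_eq_zero : ⟪b k, x⟫_ℂ = 0 := hx _ mem_ker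
      simp [inner_eq_zero]
    · gcongr
      exact minNonzeroEig_le hμ (b.orthonormal.ne_zero k) (apply_basis k)
  calc minNonzeroEig A * ‖x‖ ^ 2 = ∑ k, minNonzeroEig A * ‖⟪b k, x⟫_ℂ‖ ^ 2 := by
        rw [← mul_sum, b.sum_sq_norm_inner_right]
    _ ≤ ∑ k, μ k * ‖⟪b k, x⟫_ℂ‖ ^ 2 := sum_le_sum fun k _ ↦ term_le k
    _ = A.reApplyInnerSelf x := (re_inner_apply_self_eq_sum_eigenvalues hsymm rfl x).symm

theorem IsProjector.isStarProjection {P : E →L[ℂ] E} (hP : IsProjector P) : IsStarProjection P :=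
  ⟨hP.2, hP.1⟩

/-- Detectability lemma: for a frustration-free Hamiltonian `H = Σᵢ Pᵢ`
(orthogonal projectors, each failing to commute with at most `g` others, partitioned into `L`
layers of pairwise commuting projectors, with a nonzero common ground space), spectral gap
`γ`, and any unit vector `ψ` orthogonal to the ground space, `‖DL(H)ψ‖² ≤ 1/(1 + γ/g²)`. -/
theorem stmt_5 {ι : Type*} [Fintype ι] [DecidableEq ι] {L : ℕ}
    (P : ι → (E →L[ℂ] E)) (hproj : ∀ i, IsProjector (P i))
    (layer : ι → Fin L)
    (hcomm : ∀ i j, layer i = layer j → Commute (P i) (P j))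
    (g : ℕ) (hg : 0 < g)
    (hgbound : ∀ i, Nat.card {j : ι // j ≠ i ∧ ¬ Commute (P i) (P j)} ≤ g)
    (hff : ∃ v : E, v ≠ 0 ∧ ∀ i, P i v = 0)
    (γ : ℝ) (hγ : γ = minNonzeroEig (∑ i, P i))
    (ψ : E) (hψ : ‖ψ‖ = 1) (hψG : ψ ∈ (LinearMap.ker ((∑ i, P i : E →L[ℂ] E) : E →ₗ[ℂ] E))ᗮ) :
    ‖DLop P layer hcomm ψ‖ ^ 2 ≤ 1 / (1 + γ / (g : ℝ) ^ 2) := by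
  have hP (i) : IsStarProjection (P i) := (hproj i).isStarProjection
  have hpos : (∑ i, P i).IsPositive := ContinuousLinearMap.isPositive_sum _ fun i _ ↦
    ContinuousLinearMap.nonneg_iff_isPositive _ |>.mp (hP i).nonneg
  obtain ⟨l, hl, hmem, hDL⟩ := exists_DLop_eq_complProd P layer hcomm
  simpa only [hDL, hγ, hψ, one_pow] using stmt_5_general hP hg hgbound (minNonzeroEig_nonneg _)
    (fun _ ↦ minNonzeroEig_mul_norm_sq_le hpos) hl hmem hψG
end

section
/- (Converse to the detectability lemma for two layers.) Let P_1,…,P_p be pairwise commuting orthogonal projectors and Q_1,…,Q_q be pairwise commuting orthogonal projectors on a finite-dimensional complex Hilbert space (no commutation assumed between the two families). Set H = Σ_i P_i + Σ_j Q_j, Π_1 = ∏_i (1 − P_i), and Π_2 = ∏_j (1 − Q_j). Then for any unit vector ψ, ‖Π_1 Π_2 ψ‖² ≥ 1 − 3·⟨ψ, Hψ⟩. -/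
variable {E : Type*} [NormedAddCommGroup E] [InnerProductSpace ℂ E] [FiniteDimensional ℂ E]

/- Write `aᶜ` for `1 - a`. If `a` is an orthogonal projector, Pythagoras applied to
`(1 - a b) v = aᶜ v + a (bᶜ v)` gives `‖(1 - a b) v‖² ≤ ‖aᶜ v‖² + ‖bᶜ v‖²`; iterating,
`‖Πᶜ v‖² ≤ ∑ i, ‖P i v‖²` for the product `Π` of the `(P i)ᶜ`. Commutativity within a layer makes
`Π` again an orthogonal projector, so the two layers reduce to a single pair of projectors
`A = Π₁`, `B = Π₂`, where
`‖v‖² - ‖A (B v)‖² = ‖Bᶜ v‖² + ‖Aᶜ (B v)‖²` and `‖Aᶜ (B v)‖ ≤ ‖Aᶜ v‖ + ‖Bᶜ v‖`. -/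

open scoped Function

theorem pairwise_commute_one_sub {ι R : Type*} [Ring R] {s : Set ι} {f : ι → R}
    (hf : s.Pairwise (Commute on f)) : s.Pairwise (Commute on fun i => 1 - f i) :=
  hf.imp fun _ _ h => (Commute.one_left _).sub_left ((Commute.one_right _).sub_right h)

section SymmetricProjection

open LinearMap

variable {𝕜 F ι κ : Type*} [RCLike 𝕜] [SeminormedAddCommGroup F] [InnerProductSpace 𝕜 F]
  {A B : F →ₗ[𝕜] F}

theorem isSymmetricProjection_one_sub (hA : A.IsSymmetricProjection) :
    (1 - A).IsSymmetricProjection :=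
  ⟨hA.isIdempotentElem.one_sub, IsSymmetric.one.sub hA.isSymmetric⟩

theorem isSymmetricProjection_mul_of_commute (hA : A.IsSymmetricProjection)
    (hB : B.IsSymmetricProjection) (hAB : Commute A B) : (A * B).IsSymmetricProjection :=
  ⟨hA.isIdempotentElem.mul_of_commute hAB hB.isIdempotentElem,
    hA.isSymmetric.mul_of_commute hB.isSymmetric hAB⟩

theorem isSymmetricProjection_noncommProd {s : Finset ι} {P : ι → F →ₗ[𝕜] F}
    (hP : ∀ i ∈ s, (P i).IsSymmetricProjection)
    (hcomm : (s : Set ι).Pairwise (Commute on P)) :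
    (s.noncommProd P hcomm).IsSymmetricProjection := by
  induction s using Finset.cons_induction with
  | empty => exact ⟨IsIdempotentElem.one, IsSymmetric.one⟩
  | cons a s ha ih =>
    rw [Finset.forall_mem_cons] at hP
    rw [Finset.noncommProd_cons]
    refine isSymmetricProjection_mul_of_commute hP.1 (ih hP.2 _)
      (Finset.noncommProd_commute _ _ _ _ fun i hi => ?_)
    exact hcomm (Finset.mem_cons_self a s) (Finset.mem_cons_of_mem hi)
      (ne_of_mem_of_not_mem hi ha).symm

theorem re_inner_self_apply_eq_norm_sq (hA : A.IsSymmetricProjection) (v : F) :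
    RCLike.re (inner 𝕜 v (A v)) = ‖A v‖ ^ 2 := by
  rw [← inner_self_eq_norm_sq (𝕜 := 𝕜), hA.isSymmetric, ← Module.End.mul_apply,
    hA.isIdempotentElem.eq]

theorem norm_apply_sq_add_norm_one_sub_apply_sq (hA : A.IsSymmetricProjection) (v : F) :
    ‖A v‖ ^ 2 + ‖(1 - A) v‖ ^ 2 = ‖v‖ ^ 2 := by
  rw [← re_inner_self_apply_eq_norm_sq hA,
    ← re_inner_self_apply_eq_norm_sq (isSymmetricProjection_one_sub hA), ← map_add,
    ← inner_add_right, ← LinearMap.add_apply, add_sub_cancel, Module.End.one_apply,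
    inner_self_eq_norm_sq]

theorem norm_apply_le_of_isSymmetricProjection (hA : A.IsSymmetricProjection) (v : F) :
    ‖A v‖ ≤ ‖v‖ := by
  rw [← sq_le_sq₀ (norm_nonneg _) (norm_nonneg _), ← norm_apply_sq_add_norm_one_sub_apply_sq hA v]
  exact le_add_of_nonneg_right (sq_nonneg _)

theorem norm_one_sub_mul_apply_sq_le (hA : A.IsSymmetricProjection) (B : F →ₗ[𝕜] F) (v : F) :
    ‖(1 - A * B) v‖ ^ 2 ≤ ‖(1 - A) v‖ ^ 2 + ‖(1 - B) v‖ ^ 2 := by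
  have range_part : A * (1 - A * B) = A * (1 - B) := by
    rw [mul_sub, ← mul_assoc, hA.isIdempotentElem.eq, mul_sub]
  have ker_part : (1 - A) * (1 - A * B) = 1 - A := by
    rw [mul_sub, ← mul_assoc, hA.isIdempotentElem.one_sub_mul_self, zero_mul, mul_one, sub_zero]
  calc ‖(1 - A * B) v‖ ^ 2
      = ‖A ((1 - A * B) v)‖ ^ 2 + ‖(1 - A) ((1 - A * B) v)‖ ^ 2 :=
        (norm_apply_sq_add_norm_one_sub_apply_sq hA _).symm
    _ = ‖A ((1 - B) v)‖ ^ 2 + ‖(1 - A) v‖ ^ 2 := by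
        simp only [← Module.End.mul_apply, range_part, ker_part]
    _ ≤ ‖(1 - A) v‖ ^ 2 + ‖(1 - B) v‖ ^ 2 := by
        rw [add_comm]
        gcongr
        exact norm_apply_le_of_isSymmetricProjection hA _

theorem norm_one_sub_noncommProd_apply_sq_le {s : Finset ι} {P : ι → F →ₗ[𝕜] F}
    (hP : ∀ i ∈ s, (P i).IsSymmetricProjection)
    (hcomm : (s : Set ι).Pairwise (Commute on P)) (v : F) :
    ‖(1 - s.noncommProd P hcomm) v‖ ^ 2 ≤ ∑ i ∈ s, ‖(1 - P i) v‖ ^ 2 := by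
  induction s using Finset.cons_induction with
  | empty => simp
  | cons a s ha ih =>
    rw [Finset.forall_mem_cons] at hP
    rw [Finset.noncommProd_cons, Finset.sum_cons]
    exact (norm_one_sub_mul_apply_sq_le hP.1 _ v).trans (by gcongr; exact ih hP.2 _)

theorem norm_one_sub_noncommProd_one_sub_apply_sq_le {s : Finset ι} {P : ι → F →ₗ[𝕜] F}
    (hP : ∀ i ∈ s, (P i).IsSymmetricProjection)
    (hcomm : (s : Set ι).Pairwise (Commute on fun i => 1 - P i)) (v : F) :
    ‖(1 - s.noncommProd (fun i => 1 - P i) hcomm) v‖ ^ 2 ≤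
      RCLike.re (inner 𝕜 v ((∑ i ∈ s, P i) v)) := by
  calc ‖(1 - s.noncommProd (fun i => 1 - P i) hcomm) v‖ ^ 2
      ≤ ∑ i ∈ s, ‖(1 - (1 - P i)) v‖ ^ 2 :=
        norm_one_sub_noncommProd_apply_sq_le
          (fun i hi => isSymmetricProjection_one_sub (hP i hi)) hcomm v
    _ = ∑ i ∈ s, RCLike.re (inner 𝕜 v (P i v)) :=
        Finset.sum_congr rfl fun i hi => by
          rw [sub_sub_cancel, re_inner_self_apply_eq_norm_sq (hP i hi)]
    _ = RCLike.re (inner 𝕜 v ((∑ i ∈ s, P i) v)) := by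
        rw [LinearMap.sum_apply, inner_sum, map_sum]

theorem norm_sq_sub_le_norm_apply_apply_sq (hA : A.IsSymmetricProjection)
    (hB : B.IsSymmetricProjection) (v : F) :
    ‖v‖ ^ 2 - 3 * (‖(1 - A) v‖ ^ 2 + ‖(1 - B) v‖ ^ 2) ≤ ‖A (B v)‖ ^ 2 := by
  have pythagoras_A := norm_apply_sq_add_norm_one_sub_apply_sq hA (B v)
  have pythagoras_B := norm_apply_sq_add_norm_one_sub_apply_sq hB v
  have triangle : ‖(1 - A) (B v)‖ ≤ ‖(1 - A) v‖ + ‖(1 - B) v‖ := by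
    calc ‖(1 - A) (B v)‖ = ‖(1 - A) v - (1 - A) ((1 - B) v)‖ := by
          rw [← map_sub, LinearMap.sub_apply 1 B, Module.End.one_apply, sub_sub_cancel]
      _ ≤ ‖(1 - A) v‖ + ‖(1 - A) ((1 - B) v)‖ := norm_sub_le _ _
      _ ≤ ‖(1 - A) v‖ + ‖(1 - B) v‖ := by
          gcongr
          exact norm_apply_le_of_isSymmetricProjection (isSymmetricProjection_one_sub hA) _
  have triangle_sq : ‖(1 - A) (B v)‖ ^ 2 ≤ 2 * (‖(1 - A) v‖ ^ 2 + ‖(1 - B) v‖ ^ 2) :=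
    (pow_le_pow_left₀ (norm_nonneg _) triangle 2).trans add_sq_le
  linarith [sq_nonneg ‖(1 - A) v‖]

theorem stmt_7_general {s : Finset ι} {t : Finset κ} {P : ι → F →ₗ[𝕜] F} {Q : κ → F →ₗ[𝕜] F}
    (hP : ∀ i ∈ s, (P i).IsSymmetricProjection) (hQ : ∀ j ∈ t, (Q j).IsSymmetricProjection)
    (hPcomm : (s : Set ι).Pairwise (Commute on P)) (hQcomm : (t : Set κ).Pairwise (Commute on Q))
    (v : F) :
    ‖v‖ ^ 2 - 3 * RCLike.re (inner 𝕜 v ((∑ i ∈ s, P i + ∑ j ∈ t, Q j) v)) ≤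
      ‖s.noncommProd (fun i => 1 - P i) (pairwise_commute_one_sub hPcomm)
        (t.noncommProd (fun j => 1 - Q j) (pairwise_commute_one_sub hQcomm) v)‖ ^ 2 := by
  have two_layers := norm_sq_sub_le_norm_apply_apply_sq
    (isSymmetricProjection_noncommProd (fun i hi => isSymmetricProjection_one_sub (hP i hi))
      (pairwise_commute_one_sub hPcomm))
    (isSymmetricProjection_noncommProd (fun j hj => isSymmetricProjection_one_sub (hQ j hj))
      (pairwise_commute_one_sub hQcomm)) v
  have energy_P :=
    norm_one_sub_noncommProd_one_sub_apply_sq_le hP (pairwise_commute_one_sub hPcomm) v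
  have energy_Q :=
    norm_one_sub_noncommProd_one_sub_apply_sq_le hQ (pairwise_commute_one_sub hQcomm) v
  rw [LinearMap.add_apply, inner_add_right, map_add]
  linarith

theorem toLinearMap_noncommProd_one_sub {s : Finset ι} {P : ι → F →L[𝕜] F}
    (hcomm : (s : Set ι).Pairwise (Commute on P)) :
    (s.noncommProd (fun i => 1 - P i) (pairwise_commute_one_sub hcomm)).toLinearMap =
      s.noncommProd (fun i => 1 - (P i).toLinearMap) (pairwise_commute_one_sub
        fun _ hi _ hj hij => (hcomm hi hj hij).map ContinuousLinearMap.toLinearMapRingHom) :=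
  Finset.map_noncommProd s _ (pairwise_commute_one_sub hcomm)
    ContinuousLinearMap.toLinearMapRingHom

end SymmetricProjection

theorem IsProjector.isSymmetricProjection {P : E →L[ℂ] E} (hP : IsProjector P) :
    P.toLinearMap.IsSymmetricProjection :=
  ContinuousLinearMap.IsStarProjection.isSymmetricProjection ⟨hP.2, hP.1⟩

/-- Converse to the detectability lemma for two layers: let `P₁,…,P_p` and
`Q₁,…,Q_q` be two families of orthogonal projectors, each family pairwise commuting (no
commutation assumed between the families). With `H = Σᵢ Pᵢ + Σⱼ Qⱼ`, `Π₁ = ∏ᵢ (1 − Pᵢ)` and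
`Π₂ = ∏ⱼ (1 − Qⱼ)`, every unit vector `ψ` satisfies `‖Π₁ Π₂ ψ‖² ≥ 1 − 3·⟨ψ, Hψ⟩`. -/
theorem stmt_7 {p q : ℕ} (P : Fin p → (E →L[ℂ] E)) (Q : Fin q → (E →L[ℂ] E))
    (hPproj : ∀ i, IsProjector (P i)) (hQproj : ∀ j, IsProjector (Q j))
    (hPcomm : ∀ i i', Commute (P i) (P i')) (hQcomm : ∀ j j', Commute (Q j) (Q j'))
    (ψ : E) (hψ : ‖ψ‖ = 1) :
    1 - 3 * (inner ℂ ψ ((∑ i, P i + ∑ j, Q j) ψ) : ℂ).re ≤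
      ‖(Finset.univ.noncommProd (fun i => 1 - P i)
          (fun i _ i' _ _ =>
            Commute.sub_left (Commute.one_left _)
              (Commute.sub_right (Commute.one_right _) (hPcomm i i'))))
        ((Finset.univ.noncommProd (fun j => 1 - Q j)
          (fun j _ j' _ _ =>
            Commute.sub_left (Commute.one_left _)
              (Commute.sub_right (Commute.one_right _) (hQcomm j j')))) ψ)‖ ^ 2 := by
  have general := stmt_7_general (s := Finset.univ) (t := Finset.univ)
    (fun i _ => (hPproj i).isSymmetricProjection) (fun j _ => (hQproj j).isSymmetricProjection)
    (fun i _ i' _ _ => (hPcomm i i').map ContinuousLinearMap.toLinearMapRingHom)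
    (fun j _ j' _ _ => (hQcomm j j').map ContinuousLinearMap.toLinearMapRingHom) ψ
  rwa [hψ, one_pow, ← toLinearMap_noncommProd_one_sub fun i _ i' _ _ => hPcomm i i',
    ← toLinearMap_noncommProd_one_sub fun j _ j' _ _ => hQcomm j j',
    ← ContinuousLinearMap.toLinearMap_sum, ← ContinuousLinearMap.toLinearMap_sum,
    ← ContinuousLinearMap.toLinearMap_add] at general
end
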